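/- Propagator without zero mode (Lemma 2.19, part 8): Define the zero-mode-removed propagator Θ̊^(B)_t(a,b) := Θ^(B)_t(a,b) − L^{-2d}·Σ_{a',b'∈ℤ_L^d} Θ^(B)_t(a',b'). For any constant τ > 0, there exists a constant C > 0, depending only on d, C₀ and τ, such that for every integer L ≥ 2, every t ∈ [0,1), and every a ∈ ℤ_L^d: |Θ̊^(B)_t(0,a)| ≤ C · L^τ · (|a|+1)^{-(d−2)}. -/

import Mathlib

/-- Periodic L¹ distance on the discrete torus `(ZMod n)^d`. -/
def torusDist {n d : ℕ} (x y : Fin d → ZMod n) : ℕ :=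
  ∑ i, min (x i - y i).val (y i - x i).val

/-- The block-level variance matrix `S^(B)` on `ℤ_L^d`, with coupling constant `λ`:
`S^(B)_{ab} = (1+2dλ²)⁻¹ 1_{a=b} + λ²(1+2dλ²)⁻¹ 1_{a∼b}`. -/
noncomputable def SBmat (d L : ℕ) [NeZero L] (lam : ℝ) :
    Matrix (Fin d → ZMod L) (Fin d → ZMod L) ℂ :=
  Matrix.of fun a b =>
    if a = b then ((1 / (1 + 2 * d * lam ^ 2) : ℝ) : ℂ)
    else if torusDist a b = 1 then ((lam ^ 2 / (1 + 2 * d * lam ^ 2) : ℝ) : ℂ)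
    else 0

/-- The propagator `Θ^(B)_ξ := (I − ξ·S^(B))⁻¹`. -/
noncomputable def ThetaB (d L : ℕ) [NeZero L] (lam : ℝ) (ξ : ℂ) :
    Matrix (Fin d → ZMod L) (Fin d → ZMod L) ℂ :=
  ((1 : Matrix (Fin d → ZMod L) (Fin d → ZMod L) ℂ) - ξ • SBmat d L lam)⁻¹


/-- Absolute value of the representative of least absolute value. -/
def zAbs {L : ℕ} (z : ZMod L) : ℕ := z.valMinAbs.natAbs

lemma zAbs_eq_min {L : ℕ} [NeZero L] (z : ZMod L) : zAbs z = min z.val (-z).val := by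
  unfold zAbs
  rw [ZMod.valMinAbs_natAbs_eq_min]
  by_cases h : z = 0
  · subst h; simp
  · rw [ZMod.neg_val]; simp [h]

lemma zAbs_intCast_le {L : ℕ} [NeZero L] (j : ℤ) : zAbs (j : ZMod L) ≤ j.natAbs := by
  unfold zAbs
  exact ZMod.natAbs_min_of_le_div_two L _ _ (ZMod.coe_valMinAbs _) (ZMod.natAbs_valMinAbs_le _)

lemma torusDist_eq {L d : ℕ} [NeZero L] (x y : Fin d → ZMod L) :
    torusDist x y = ∑ i, zAbs (x i - y i) := by
  unfold torusDist
  refine Finset.sum_congr rfl fun i _ => ?_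
  rw [zAbs_eq_min, neg_sub]

lemma zAbs_eq_zero {L : ℕ} [NeZero L] (z : ZMod L) : zAbs z = 0 ↔ z = 0 := by
  unfold zAbs; simp

lemma zAbs_neg {L : ℕ} [NeZero L] (z : ZMod L) : zAbs (-z) = zAbs z := by
  unfold zAbs; exact ZMod.natAbs_valMinAbs_neg z

lemma zAbs_one {L : ℕ} [NeZero L] (hL : 2 ≤ L) : zAbs (1 : ZMod L) = 1 := by
  have : ((1 : ℕ) : ZMod L).valMinAbs = (1 : ℕ) := ZMod.valMinAbs_natCast_of_le_half (by omega)
  unfold zAbs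
  rw [Nat.cast_one] at this
  rw [this]; rfl

lemma eq_of_zAbs_one {L : ℕ} [NeZero L] (z : ZMod L) (h : zAbs z = 1) : z = 1 ∨ z = -1 := by
  unfold zAbs at h
  rcases Int.natAbs_eq z.valMinAbs with h' | h'
  · left; rw [← ZMod.coe_valMinAbs z, h', h]; simp
  · right; rw [← ZMod.coe_valMinAbs z, h', h]; simp

lemma zAbs_le_half {L : ℕ} [NeZero L] (z : ZMod L) : 2 * zAbs z ≤ L := by
  have := ZMod.natAbs_valMinAbs_le z
  unfold zAbs; omega

/-- the cosh weight in one dimension -/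
lemma cosh_step {L : ℕ} [NeZero L] (θ : ℝ) (z : ZMod L) :
    Real.cosh (θ * zAbs (z + 1)) + Real.cosh (θ * zAbs (z - 1)) ≤
      2 * Real.cosh θ * Real.cosh (θ * zAbs z) := by
  have key : ∀ j : ℤ, Real.cosh (θ * zAbs (j : ZMod L)) ≤ Real.cosh (θ * j) := by
    intro j
    rw [Real.cosh_le_cosh, abs_mul, abs_mul]
    refine mul_le_mul_of_nonneg_left ?_ (abs_nonneg _)
    rw [Nat.abs_cast, ← Int.cast_abs, Int.abs_eq_natAbs]
    exact_mod_cast zAbs_intCast_le j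
  set j := z.valMinAbs with hj
  have hz : (j : ZMod L) = z := ZMod.coe_valMinAbs z
  have h1 := key (j + 1)
  have h2 := key (j - 1)
  have h3 : Real.cosh (θ * zAbs z) = Real.cosh (θ * j) := by
    rw [← Real.cosh_abs (θ * j), ← Real.cosh_abs (θ * zAbs z), abs_mul, abs_mul]
    congr 2
    rw [Nat.abs_cast, ← Int.cast_abs, Int.abs_eq_natAbs]
    rfl
  push_cast at h1 h2
  rw [hz] at h1 h2
  rw [h3]
  have e1 : θ * ((j:ℝ) + 1) = θ * j + θ := by ring
  have e2 : θ * ((j:ℝ) - 1) = θ * j - θ := by ring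
  rw [e1, Real.cosh_add] at h1
  rw [e2, Real.cosh_sub] at h2
  linarith

lemma one_sub_cos_ge {L : ℕ} [NeZero L] (z : ZMod L) :
    8 * (zAbs z : ℝ) ^ 2 / (L : ℝ) ^ 2 ≤ 1 - Real.cos (2 * Real.pi * z.valMinAbs / L) := by
  have hL : (0 : ℝ) < L := by exact_mod_cast NeZero.pos L
  have h0 : |((z.valMinAbs : ℤ) : ℝ)| = zAbs z := by
    rw [← Int.cast_abs, Int.abs_eq_natAbs]; rfl
  have h1 : |2 * Real.pi * z.valMinAbs / L| ≤ Real.pi := by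
    rw [abs_div, abs_mul, h0, Nat.abs_cast, abs_of_pos (by positivity), div_le_iff₀ hL]
    have : (2 * zAbs z : ℝ) ≤ L := by exact_mod_cast zAbs_le_half z
    nlinarith [Real.pi_pos]
  have h3 := Real.cos_le_one_sub_mul_cos_sq h1
  have h4 : 2 / Real.pi ^ 2 * (2 * Real.pi * z.valMinAbs / L) ^ 2
      = 8 * (zAbs z : ℝ) ^ 2 / (L : ℝ) ^ 2 := by
    rw [← h0, sq_abs]
    have := Real.pi_pos.ne'
    field_simp
    ring
  rw [h4] at h3
  linarith

lemma sum_eq_one_iff_aux {d : ℕ} (f : Fin d → ℕ) :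
    ∑ i, f i = 1 ↔ ∃ i ∈ (Finset.univ : Finset (Fin d)), f i = 1 ∧ ∀ j ∈ (Finset.univ : Finset (Fin d)), j ≠ i → f j = 0 := by
  constructor
  · intro h
    have h0 : ∃ i ∈ (Finset.univ : Finset (Fin d)), f i ≠ 0 := by
      by_contra! hc
      rw [Finset.sum_eq_zero hc] at h
      omega
    obtain ⟨i, hi, hne⟩ := h0
    rw [← Finset.add_sum_erase _ _ hi] at h
    have h2 : ∑ x ∈ Finset.univ.erase i, f x = 0 := by omega
    refine ⟨i, hi, by omega, fun j hj hji => ?_⟩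
    exact (Finset.sum_eq_zero_iff.1 h2) j (Finset.mem_erase.2 ⟨hji, hj⟩)
  · rintro ⟨i, hi, h1, h2⟩
    rw [Finset.sum_eq_single i h2 (fun h => absurd hi h), h1]

/-- basis vector -/
def eV {d L : ℕ} (i : Fin d) : Fin d → ZMod L := Pi.single i 1

lemma torusDist_one {d L : ℕ} [NeZero L] (a b : Fin d → ZMod L) (h : torusDist a b = 1) :
    ∃ i, b = a + eV i ∨ b = a - eV i := by
  rw [torusDist_eq, sum_eq_one_iff_aux] at h
  obtain ⟨i, -, hi, hj⟩ := h
  refine ⟨i, ?_⟩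
  have hne : ∀ j, j ≠ i → b j = a j := fun j hji => by
    have := (zAbs_eq_zero _).1 (hj j (Finset.mem_univ _) hji)
    exact (sub_eq_zero.1 this).symm
  rcases eq_of_zAbs_one _ hi with h1 | h1
  · right
    funext j
    by_cases hji : j = i
    · subst hji; simp [eV, ← h1]
    · simp [eV, hji, hne j hji]
  · left
    funext j
    by_cases hji : j = i
    · subst hji
      have : (1 : ZMod L) = -(a j - b j) := by rw [h1]; simp
      simp [eV, this]
    · simp [eV, hji, hne j hji]

lemma torusDist_add {d L : ℕ} [NeZero L] (hL : 2 ≤ L) (a : Fin d → ZMod L) (i : Fin d) :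
    torusDist a (a + eV i) = 1 := by
  rw [torusDist_eq, sum_eq_one_iff_aux]
  refine ⟨i, Finset.mem_univ _, ?_, ?_⟩
  · simp [eV, zAbs_neg, zAbs_one hL]
  · intro j _ hji
    simp [eV, hji, zAbs_eq_zero]

lemma torusDist_sub {d L : ℕ} [NeZero L] (hL : 2 ≤ L) (a : Fin d → ZMod L) (i : Fin d) :
    torusDist a (a - eV i) = 1 := by
  rw [torusDist_eq, sum_eq_one_iff_aux]
  refine ⟨i, Finset.mem_univ _, ?_, ?_⟩
  · simp [eV, zAbs_one hL]
  · intro j _ hji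
    simp [eV, hji, zAbs_eq_zero]

lemma torusDist_self {d L : ℕ} [NeZero L] (a : Fin d → ZMod L) : torusDist a a = 0 := by
  rw [torusDist_eq]; simp [zAbs_eq_zero]

/-- The lazy nearest neighbour averaging operator. -/
def avgOp {R : Type*} [CommRing R] {d L : ℕ} (α β : R) (f : (Fin d → ZMod L) → R)
    (x : Fin d → ZMod L) : R :=
  α * f x + β * ∑ i, (f (x + eV i) + f (x - eV i))

lemma eV_inj {d L : ℕ} (hL : 2 ≤ L) {i j : Fin d} (h : (eV i : Fin d → ZMod L) = eV j) :
    i = j := by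
  have : Fact (1 < L) := ⟨hL⟩
  by_contra hne
  have := congrFun h i
  simp [eV, hne] at this

lemma eV_ne_neg {d L : ℕ} (hL : 3 ≤ L) {i j : Fin d} :
    (eV i : Fin d → ZMod L) ≠ - eV j := by
  have : Fact (1 < L) := ⟨by omega⟩
  have : Fact (2 < L) := ⟨by omega⟩
  intro h
  have := congrFun h i
  by_cases hij : i = j
  · subst hij
    simp [eV] at this
    exact ZMod.neg_one_ne_one this.symm
  · simp [eV, hij] at this

lemma nbr_sum {d L : ℕ} [NeZero L] (hL : 3 ≤ L) (a b : Fin d → ZMod L) :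
    ∑ i : Fin d, ((if b = a + eV i then (1:ℂ) else 0) + (if b = a - eV i then 1 else 0)) =
      if torusDist a b = 1 then 1 else 0 := by
  split_ifs with h
  · obtain ⟨i, hi⟩ := torusDist_one a b h
    rw [Finset.sum_eq_single i]
    · rcases hi with hi | hi
      · have : ¬ (b = a - eV i) := by
          rw [hi, sub_eq_add_neg]; intro h'
          exact eV_ne_neg hL (add_left_cancel h')
        rw [if_pos hi, if_neg this, add_zero]
      · have : ¬ (b = a + eV i) := by
          rw [hi, sub_eq_add_neg]; intro h'
          exact eV_ne_neg hL (add_left_cancel h').symm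
        rw [if_pos hi, if_neg this, zero_add]
    · intro j _ hji
      rcases hi with hi | hi
      · rw [if_neg, if_neg, add_zero]
        · rw [hi, sub_eq_add_neg]; intro h'
          exact eV_ne_neg hL (add_left_cancel h')
        · rw [hi]; intro h'
          exact hji (eV_inj (by omega) (add_left_cancel h')).symm
      · rw [if_neg, if_neg, add_zero]
        · rw [hi]; intro h'
          exact hji (eV_inj (by omega) (sub_right_injective h')).symm
        · rw [hi, sub_eq_add_neg]; intro h'
          exact eV_ne_neg hL (add_left_cancel h').symm
    · simp
  · apply Finset.sum_eq_zero
    intro i _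
    rw [if_neg, if_neg, add_zero]
    · rintro rfl; exact h (torusDist_sub (by omega) a i)
    · rintro rfl; exact h (torusDist_add (by omega) a i)

/-- diagonal weight -/
noncomputable def alp (d : ℕ) (lam : ℝ) : ℝ := 1 / (1 + 2 * d * lam ^ 2)
/-- hopping weight -/
noncomputable def bet (d : ℕ) (lam : ℝ) : ℝ := lam ^ 2 / (1 + 2 * d * lam ^ 2)

lemma SB_sum {d L : ℕ} [NeZero L] (hL : 3 ≤ L) (lam : ℝ) (f : (Fin d → ZMod L) → ℂ)
    (a : Fin d → ZMod L) :
    ∑ b, SBmat d L lam a b * f b = avgOp (alp d lam : ℂ) (bet d lam : ℂ) f a := by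
  have h : ∀ b, SBmat d L lam a b = (alp d lam : ℂ) * (if b = a then 1 else 0) + (bet d lam : ℂ) *
      ∑ i : Fin d, ((if b = a + eV i then (1:ℂ) else 0) + (if b = a - eV i then 1 else 0)) := by
    intro b
    rw [nbr_sum hL]
    unfold SBmat
    rw [Matrix.of_apply]
    by_cases hab : a = b
    · subst hab
      simp [torusDist_self, alp]
    · rw [if_neg hab, if_neg (Ne.symm hab)]
      simp [bet]
  have h2 : ∀ b, SBmat d L lam a b * f b = (alp d lam : ℂ) * ((if b = a then 1 else 0) * f b) +
      (bet d lam : ℂ) *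
      ∑ i : Fin d, ((if b = a + eV i then (1:ℂ) else 0) * f b +
        (if b = a - eV i then 1 else 0) * f b) := by
    intro b
    rw [h, add_mul, mul_assoc, mul_assoc, Finset.sum_mul]
    simp only [add_mul]
  rw [Finset.sum_congr rfl fun b _ => h2 b, Finset.sum_add_distrib, ← Finset.mul_sum,
    ← Finset.mul_sum, Finset.sum_comm]
  unfold avgOp
  congr 1
  · simp
  · congr 1
    refine Finset.sum_congr rfl fun i _ => ?_
    rw [Finset.sum_add_distrib]
    simp

lemma alp_add_bet (d : ℕ) (lam : ℝ) : alp d lam + 2 * d * bet d lam = 1 := by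
  unfold alp bet
  have : (1 + 2 * d * lam ^ 2 : ℝ) ≠ 0 := by positivity
  field_simp

lemma alp_nonneg (d : ℕ) (lam : ℝ) : 0 ≤ alp d lam := by unfold alp; positivity
lemma bet_nonneg (d : ℕ) (lam : ℝ) : 0 ≤ bet d lam := by unfold bet; positivity

/-- Fourier character on the torus -/
noncomputable def eF {d L : ℕ} [NeZero L] (p x : Fin d → ZMod L) : ℂ :=
  ∏ i, ZMod.stdAddChar (p i * x i)

/-- Fourier symbol of the averaging operator -/
noncomputable def sym {d L : ℕ} (lam : ℝ) (p : Fin d → ZMod L) : ℝ :=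
  alp d lam + bet d lam * ∑ i, 2 * Real.cos (2 * Real.pi * (p i).valMinAbs / L)

lemma char_add_neg {L : ℕ} [NeZero L] (z : ZMod L) :
    (ZMod.stdAddChar z : ℂ) + ZMod.stdAddChar (-z) =
      ((2 * Real.cos (2 * Real.pi * z.valMinAbs / L) : ℝ) : ℂ) := by
  have h1 : (ZMod.stdAddChar z : ℂ) = ZMod.stdAddChar ((z.valMinAbs : ℤ) : ZMod L) := by
    rw [ZMod.coe_valMinAbs]
  have h2 : (ZMod.stdAddChar (-z) : ℂ) = ZMod.stdAddChar (((-z.valMinAbs : ℤ)) : ZMod L) := by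
    rw [Int.cast_neg, ZMod.coe_valMinAbs]
  rw [h1, h2, ZMod.stdAddChar_coe, ZMod.stdAddChar_coe]
  push_cast
  rw [Complex.two_cos]
  congr 2 <;> ring

lemma eF_add {d L : ℕ} [NeZero L] (p x y : Fin d → ZMod L) :
    eF p (x + y) = eF p x * eF p y := by
  unfold eF
  rw [← Finset.prod_mul_distrib]
  refine Finset.prod_congr rfl fun i _ => ?_
  rw [Pi.add_apply, mul_add, AddChar.map_add_eq_mul]

lemma eF_zero {d L : ℕ} [NeZero L] (p : Fin d → ZMod L) : eF p 0 = 1 := by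
  simp [eF]

lemma eF_zero_left {d L : ℕ} [NeZero L] (x : Fin d → ZMod L) : eF 0 x = 1 := by
  simp [eF]

lemma eF_eV {d L : ℕ} [NeZero L] (p : Fin d → ZMod L) (i : Fin d) :
    eF p (eV i) = ZMod.stdAddChar (p i) := by
  unfold eF
  rw [Finset.prod_eq_single i]
  · simp [eV]
  · intro j _ hji; simp [eV, hji]
  · simp

lemma eF_neg_eV {d L : ℕ} [NeZero L] (p : Fin d → ZMod L) (i : Fin d) :
    eF p (-eV i) = ZMod.stdAddChar (-p i) := by
  unfold eF
  rw [Finset.prod_eq_single i]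
  · simp [eV]
  · intro j _ hji; simp [eV, hji]
  · simp

lemma eF_pair {d L : ℕ} [NeZero L] (p x : Fin d → ZMod L) (i : Fin d) :
    eF p (x + eV i) + eF p (x - eV i) =
      eF p x * ((2 * Real.cos (2 * Real.pi * (p i).valMinAbs / L) : ℝ) : ℂ) := by
  rw [sub_eq_add_neg, eF_add, eF_add, eF_eV, eF_neg_eV, ← char_add_neg]; ring

lemma norm_eF {d L : ℕ} [NeZero L] (p x : Fin d → ZMod L) : ‖eF p x‖ = 1 := by
  unfold eF
  rw [norm_prod]
  apply Finset.prod_eq_one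
  intro i _
  exact AddChar.norm_apply _ _

lemma avgOp_eF {d L : ℕ} [NeZero L] (lam : ℝ) (p x : Fin d → ZMod L) :
    avgOp (alp d lam : ℂ) (bet d lam : ℂ) (eF p) x = (sym lam p : ℂ) * eF p x := by
  unfold avgOp sym
  simp_rw [eF_pair]
  rw [← Finset.mul_sum]
  push_cast
  ring

lemma avgOp_eF_sub {d L : ℕ} [NeZero L] (lam : ℝ) (p c x : Fin d → ZMod L) :
    avgOp (alp d lam : ℂ) (bet d lam : ℂ) (fun b => eF p (c - b)) x =
      (sym lam p : ℂ) * eF p (c - x) := by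
  have : ∀ i, eF p (c - (x + eV i)) + eF p (c - (x - eV i)) =
      eF p (c - x) * ((2 * Real.cos (2 * Real.pi * (p i).valMinAbs / L) : ℝ) : ℂ) := by
    intro i
    rw [← eF_pair, add_comm]
    congr 2 <;> abel
  unfold avgOp sym
  simp_rw [this]
  rw [← Finset.mul_sum]
  push_cast
  ring

lemma sum_eF {d L : ℕ} [NeZero L] (x : Fin d → ZMod L) :
    ∑ p, eF p x = if x = 0 then (L : ℂ) ^ d else 0 := by
  unfold eF
  rw [← Fintype.prod_sum (fun i (z : ZMod L) => (ZMod.stdAddChar (z * x i) : ℂ))]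
  simp_rw [AddChar.sum_mulShift _ (ZMod.isPrimitive_stdAddChar L)]
  split_ifs with h
  · subst h; simp
  · have : ∃ i, x i ≠ 0 := by
      by_contra! hc; exact h (funext hc)
    obtain ⟨i, hi⟩ := this
    apply Finset.prod_eq_zero (Finset.mem_univ i)
    simp [hi]

lemma sym_zero {d L : ℕ} [NeZero L] (lam : ℝ) : sym lam (0 : Fin d → ZMod L) = 1 := by
  unfold sym
  rw [← alp_add_bet d lam]
  simp; ring

lemma abs_sym_le_one {d L : ℕ} [NeZero L] (lam : ℝ) (p : Fin d → ZMod L) : |sym lam p| ≤ 1 := by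
  unfold sym
  refine (abs_add_le _ _).trans ?_
  rw [abs_of_nonneg (alp_nonneg d lam), abs_mul, abs_of_nonneg (bet_nonneg d lam)]
  have : |∑ i, 2 * Real.cos (2 * Real.pi * (p i).valMinAbs / L)| ≤ 2 * d := by
    refine (Finset.abs_sum_le_sum_abs _ _).trans ?_
    refine (Finset.sum_le_sum (g := fun _ => (2 : ℝ)) fun i _ => ?_).trans ?_
    · rw [abs_mul, abs_two]
      linarith [Real.abs_cos_le_one (2 * Real.pi * (p i).valMinAbs / L)]
    · simp; linarith
  have h2 := alp_add_bet d lam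
  nlinarith [bet_nonneg d lam]

/-- heat kernel -/
noncomputable def heat {d L : ℕ} (lam : ℝ) : ℕ → (Fin d → ZMod L) → ℝ
  | 0 => fun x => if x = 0 then 1 else 0
  | (k + 1) => avgOp (alp d lam) (bet d lam) (heat lam k)

lemma avgOp_sum {d L : ℕ} {ι : Type*} (s : Finset ι) (α β : ℂ) (c : ι → ℂ)
    (f : ι → (Fin d → ZMod L) → ℂ) (x : Fin d → ZMod L) :
    avgOp α β (fun y => ∑ p ∈ s, c p * f p y) x = ∑ p ∈ s, c p * avgOp α β (f p) x := by
  unfold avgOp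
  have h : ∀ i, (∑ p ∈ s, c p * f p (x + eV i)) + ∑ p ∈ s, c p * f p (x - eV i) =
      ∑ p ∈ s, c p * (f p (x + eV i) + f p (x - eV i)) := by
    intro i
    rw [← Finset.sum_add_distrib]
    exact Finset.sum_congr rfl fun p _ => by ring
  rw [Finset.sum_congr rfl fun i _ => h i, Finset.sum_comm, Finset.mul_sum, Finset.mul_sum,
    ← Finset.sum_add_distrib]
  refine Finset.sum_congr rfl fun p _ => ?_
  rw [← Finset.mul_sum]
  ring

lemma heat_fourier {d L : ℕ} [NeZero L] (lam : ℝ) (k : ℕ) (x : Fin d → ZMod L) :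
    (heat lam k x : ℂ) = ∑ p, (((L : ℂ) ^ d)⁻¹ * (sym lam p : ℂ) ^ k) * eF p x := by
  have hL : (L : ℂ) ≠ 0 := by exact_mod_cast NeZero.ne L
  induction k generalizing x with
  | zero =>
    simp only [pow_zero, mul_one]
    rw [← Finset.mul_sum, sum_eF]
    unfold heat
    split_ifs with h
    · push_cast; field_simp
    · simp
  | succ k ih =>
    have h1 : (heat lam (k + 1) x : ℂ) = avgOp (alp d lam : ℂ) (bet d lam : ℂ)
        (fun y => (heat lam k y : ℂ)) x := by
      simp only [heat, avgOp]; push_cast; rfl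
    rw [h1, funext ih, avgOp_sum]
    refine Finset.sum_congr rfl fun p _ => ?_
    rw [avgOp_eF]; ring

lemma one_sub_t_sym_ne {d L : ℕ} [NeZero L] (lam t : ℝ) (ht : 0 ≤ t) (ht1 : t < 1)
    (p : Fin d → ZMod L) : (1 - (t : ℂ) * sym lam p) ≠ 0 := by
  have h := abs_sym_le_one lam p
  have : (1 - t * sym lam p) ≠ 0 := by
    have := (abs_le.1 h).2
    nlinarith
  exact_mod_cast this

lemma M_mul {d L : ℕ} [NeZero L] (hL : 3 ≤ L) (lam : ℝ) (t : ℂ)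
    (f : (Fin d → ZMod L) → ℂ) (a : Fin d → ZMod L) :
    ∑ b, (1 - t • SBmat d L lam) a b * f b =
      f a - t * avgOp (alp d lam : ℂ) (bet d lam : ℂ) f a := by
  rw [← SB_sum hL, Finset.mul_sum]
  simp_rw [Matrix.sub_apply, Matrix.smul_apply, sub_mul, smul_eq_mul, mul_assoc]
  rw [Finset.sum_sub_distrib]
  simp [Matrix.one_apply]

/-- explicit Fourier inverse -/
noncomputable def Gmat (d L : ℕ) [NeZero L] (lam t : ℝ) :
    Matrix (Fin d → ZMod L) (Fin d → ZMod L) ℂ :=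
  Matrix.of fun a b => ∑ p, (((L : ℂ) ^ d)⁻¹ * (1 - (t : ℂ) * sym lam p)⁻¹) * eF p (b - a)

lemma M_mul_G {d L : ℕ} [NeZero L] (hL : 3 ≤ L) (lam t : ℝ) (ht : 0 ≤ t) (ht1 : t < 1) :
    (1 - (t : ℂ) • SBmat d L lam) * Gmat d L lam t = 1 := by
  have hL0 : (L : ℂ) ≠ 0 := by exact_mod_cast NeZero.ne L
  ext a c
  rw [Matrix.mul_apply, M_mul hL]
  simp only [Gmat, Matrix.of_apply]
  rw [avgOp_sum _ _ _ _ (fun p b => eF p (c - b)), Finset.mul_sum, ← Finset.sum_sub_distrib]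
  have : ∀ p : Fin d → ZMod L, ((L : ℂ) ^ d)⁻¹ * (1 - (t : ℂ) * sym lam p)⁻¹ * eF p (c - a) -
      t * (((L : ℂ) ^ d)⁻¹ * (1 - (t : ℂ) * sym lam p)⁻¹ *
        avgOp (alp d lam : ℂ) (bet d lam : ℂ) (fun b => eF p (c - b)) a) =
      ((L : ℂ) ^ d)⁻¹ * eF p (c - a) := by
    intro p
    rw [avgOp_eF_sub]
    have := one_sub_t_sym_ne lam t ht ht1 p
    field_simp
  rw [Finset.sum_congr rfl fun p _ => this p, ← Finset.mul_sum, sum_eF, Matrix.one_apply]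
  by_cases hac : a = c
  · subst hac; simp [hL0]
  · rw [if_neg hac, if_neg (by rw [sub_eq_zero]; exact Ne.symm hac), mul_zero]

lemma Theta_eq {d L : ℕ} [NeZero L] (hL : 3 ≤ L) (lam t : ℝ) (ht : 0 ≤ t) (ht1 : t < 1) :
    ThetaB d L lam (t : ℂ) = Gmat d L lam t :=
  Matrix.inv_eq_right_inv (M_mul_G hL lam t ht ht1)

lemma Theta_sum {d L : ℕ} [NeZero L] (hL : 3 ≤ L) (lam t : ℝ) (ht : 0 ≤ t) (ht1 : t < 1)
    (a : Fin d → ZMod L) :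
    ∑ b, ThetaB d L lam (t : ℂ) a b = (1 - (t : ℂ))⁻¹ := by
  have h1 : Gmat d L lam t * (1 - (t : ℂ) • SBmat d L lam) = 1 :=
    mul_eq_one_comm.1 (M_mul_G hL lam t ht ht1)
  have h2 : ∀ x, ∑ b, (1 - (t : ℂ) • SBmat d L lam) x b * 1 = 1 - t := by
    intro x
    rw [M_mul hL (f := fun _ => 1)]
    have := alp_add_bet d lam
    have h3 : (alp d lam : ℂ) + 2 * d * bet d lam = 1 := by exact_mod_cast this
    simp only [avgOp, Finset.sum_const, Finset.card_univ, Fintype.card_fin, nsmul_eq_mul]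
    linear_combination (-t : ℂ) * h3
  have ht' : (1 - (t : ℂ)) ≠ 0 := by
    have : 1 - t ≠ 0 := by linarith
    exact_mod_cast this
  rw [Theta_eq hL lam t ht ht1]
  have h4 : (∑ b, Gmat d L lam t a b) * (1 - (t : ℂ)) = 1 := by
    have h5 : ∑ c, (Gmat d L lam t * (1 - (t : ℂ) • SBmat d L lam)) a c = 1 := by
      rw [h1]; simp [Matrix.one_apply]
    simp_rw [Matrix.mul_apply] at h5
    rw [Finset.sum_comm] at h5
    refine Eq.trans ?_ h5
    rw [Finset.sum_mul]
    refine Finset.sum_congr rfl fun x _ => ?_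
    rw [← h2 x, Finset.mul_sum]
    simp
  exact eq_inv_of_mul_eq_one_left h4

lemma heat_nonneg {d L : ℕ} (lam : ℝ) (k : ℕ) (x : Fin d → ZMod L) : 0 ≤ heat lam k x := by
  induction k generalizing x with
  | zero => unfold heat; split_ifs <;> norm_num
  | succ k ih =>
    simp only [heat, avgOp]
    have h1 := alp_nonneg d lam
    have h2 := bet_nonneg d lam
    have h3 : 0 ≤ ∑ i, (heat lam k (x + eV i) + heat lam k (x - eV i)) :=
      Finset.sum_nonneg fun i _ => add_nonneg (ih _) (ih _)
    have h4 := ih x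
    positivity

lemma sum_mul_avgOp {d L : ℕ} [NeZero L] (α β : ℝ) (h u : (Fin d → ZMod L) → ℝ) :
    ∑ x, h x * avgOp α β u x = ∑ x, avgOp α β h x * u x := by
  unfold avgOp
  have e1 : ∀ i : Fin d, ∑ x, h x * u (x + eV i) = ∑ x, h (x - eV i) * u x := by
    intro i
    refine Fintype.sum_equiv (Equiv.addRight (eV i)) _ _ fun x => ?_
    simp
  have e2 : ∀ i : Fin d, ∑ x, h x * u (x - eV i) = ∑ x, h (x + eV i) * u x := by
    intro i
    refine Fintype.sum_equiv (Equiv.subRight (eV i)) _ _ fun x => ?_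
    simp
  have l : ∑ x, h x * (α * u x + β * ∑ i, (u (x + eV i) + u (x - eV i))) =
      α * ∑ x, h x * u x + β * ∑ i, ∑ x, (h x * u (x + eV i) + h x * u (x - eV i)) := by
    rw [Finset.sum_comm, Finset.mul_sum, Finset.mul_sum, ← Finset.sum_add_distrib]
    refine Finset.sum_congr rfl fun x _ => ?_
    simp_rw [← mul_add]
    rw [← Finset.mul_sum]; ring
  have r : ∑ x, (α * h x + β * ∑ i, (h (x + eV i) + h (x - eV i))) * u x =
      α * ∑ x, h x * u x + β * ∑ i, ∑ x, (h (x + eV i) * u x + h (x - eV i) * u x) := by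
    rw [Finset.sum_comm, Finset.mul_sum, Finset.mul_sum, ← Finset.sum_add_distrib]
    refine Finset.sum_congr rfl fun x _ => ?_
    simp_rw [← add_mul]
    rw [← Finset.sum_mul]; ring
  rw [l, r]
  simp_rw [Finset.sum_add_distrib, e1, e2]
  ring

lemma avgOp_cosh {d L : ℕ} [NeZero L] (lam θ : ℝ) (i : Fin d) (x : Fin d → ZMod L) :
    avgOp (alp d lam) (bet d lam) (fun y => Real.cosh (θ * zAbs (y i))) x ≤
      Real.cosh θ * Real.cosh (θ * zAbs (x i)) := by
  unfold avgOp
  set H := Real.cosh (θ * zAbs (x i)) with hH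
  have hH0 : 0 < H := Real.cosh_pos _
  have h1 : 1 ≤ Real.cosh θ := Real.one_le_cosh θ
  have h2 : ∑ j, (Real.cosh (θ * zAbs ((x + eV j : Fin d → ZMod L) i)) + Real.cosh (θ * zAbs ((x - eV j : Fin d → ZMod L) i))) ≤
      ∑ j : Fin d, 2 * Real.cosh θ * H := by
    refine Finset.sum_le_sum fun j _ => ?_
    by_cases hij : i = j
    · subst hij
      have := cosh_step θ (x i)
      simpa [eV] using this
    · simp only [eV, Pi.add_apply, Pi.sub_apply, Pi.single_apply, if_neg hij, add_zero, sub_zero]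
      rw [← hH]
      nlinarith
  simp only [Finset.sum_const, Finset.card_univ, Fintype.card_fin, nsmul_eq_mul] at h2
  have h3 := alp_add_bet d lam
  have h4 := mul_le_mul_of_nonneg_left h2 (bet_nonneg d lam)
  have h5 : alp d lam * H ≤ alp d lam * (Real.cosh θ * H) :=
    mul_le_mul_of_nonneg_left (by nlinarith) (alp_nonneg d lam)
  calc _ ≤ alp d lam * (Real.cosh θ * H) + bet d lam * (d * (2 * Real.cosh θ * H)) :=
        add_le_add h5 h4
    _ = (alp d lam + 2 * d * bet d lam) * (Real.cosh θ * H) := by ring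
    _ = _ := by rw [h3, one_mul]

lemma heat_cosh {d L : ℕ} [NeZero L] (lam θ : ℝ) (i : Fin d) (k : ℕ) :
    ∑ x : Fin d → ZMod L, Real.cosh (θ * zAbs (x i)) * heat lam k x ≤ Real.cosh θ ^ k := by
  induction k with
  | zero => simp [heat, zAbs]
  | succ k ih =>
    simp only [heat]
    rw [sum_mul_avgOp]
    calc _ ≤ ∑ x : Fin d → ZMod L, Real.cosh θ * (Real.cosh (θ * zAbs (x i)) * heat lam k x) := by
          refine Finset.sum_le_sum fun x _ => ?_
          rw [← mul_assoc]
          exact mul_le_mul_of_nonneg_right (avgOp_cosh lam θ i x) (heat_nonneg _ _ _)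
      _ = Real.cosh θ * ∑ x : Fin d → ZMod L, Real.cosh (θ * zAbs (x i)) * heat lam k x := by
          rw [Finset.mul_sum]
      _ ≤ Real.cosh θ * Real.cosh θ ^ k := mul_le_mul_of_nonneg_left ih (Real.cosh_pos θ).le
      _ = _ := by ring

lemma heat_offdiag {d L : ℕ} [NeZero L] (lam : ℝ) (i : Fin d) (k : ℕ) (hk : 0 < k)
    (a : Fin d → ZMod L) :
    heat lam k a ≤ 2 * Real.exp (-((zAbs (a i) : ℝ) ^ 2 / (2 * k))) := by
  have hk' : (0 : ℝ) < k := by exact_mod_cast hk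
  set m : ℝ := (zAbs (a i) : ℝ) with hm
  set θ : ℝ := m / k with hθ
  have h1 : Real.cosh (θ * m) * heat lam k a ≤ Real.cosh θ ^ k := by
    refine le_trans ?_ (heat_cosh (L := L) lam θ i k)
    exact Finset.single_le_sum (f := fun x => Real.cosh (θ * zAbs (x i)) * heat lam k x)
      (fun x _ => mul_nonneg (Real.cosh_pos _).le (heat_nonneg _ _ _)) (Finset.mem_univ a)
  have h2 : Real.exp (θ * m) / 2 ≤ Real.cosh (θ * m) := by
    rw [Real.cosh_eq]
    have := Real.exp_pos (-(θ * m))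
    linarith
  have h3 : Real.cosh θ ^ k ≤ Real.exp (k * (θ ^ 2 / 2)) := by
    rw [Real.exp_nat_mul]
    exact pow_le_pow_left₀ (Real.cosh_pos θ).le (Real.cosh_le_exp_half_sq θ) k
  have h4 : Real.exp (θ * m) / 2 * heat lam k a ≤ Real.exp (k * (θ ^ 2 / 2)) :=
    (mul_le_mul_of_nonneg_right h2 (heat_nonneg _ _ _)).trans (h1.trans h3)
  have h5 : Real.exp (k * (θ ^ 2 / 2)) = Real.exp (-(m ^ 2 / (2 * k))) * Real.exp (θ * m) := by
    rw [← Real.exp_add]; congr 1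
    rw [hθ]; field_simp; ring
  rw [h5] at h4
  have h6 := Real.exp_pos (θ * m)
  by_contra! hc
  nlinarith

/-- uniform ellipticity constant -/
noncomputable def cc (d : ℕ) (C₀ : ℝ) : ℝ := 1 / (d * (1 + 2 * d * C₀ ^ 2))

lemma abs_sym_le {d L : ℕ} [NeZero L] (hd : 3 ≤ d) (C₀ : ℝ) (hC₀ : 1 ≤ C₀) (lam : ℝ)
    (h1 : C₀⁻¹ ≤ lam) (h2 : lam ≤ C₀) (p : Fin d → ZMod L) :
    |sym lam p| ≤ 1 - ∑ i, cc d C₀ * (8 * (zAbs (p i) : ℝ) ^ 2 / (L : ℝ) ^ 2) := by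
  have hd' : (3 : ℝ) ≤ d := by exact_mod_cast hd
  have hC : 0 < C₀ := by linarith
  have hl : 0 < lam := lt_of_lt_of_le (by positivity) h1
  have hl2 : lam ^ 2 ≤ C₀ ^ 2 := by gcongr
  have hl3 : 1 ≤ C₀ ^ 2 * lam ^ 2 := by
    have : 1 ≤ C₀ * lam := by
      have := mul_le_mul_of_nonneg_left h1 hC.le
      rwa [mul_inv_cancel₀ hC.ne'] at this
    nlinarith
  set E : ℝ := ∑ i, (1 - Real.cos (2 * Real.pi * (p i).valMinAbs / L)) with hE
  have hcpos : 0 < cc d C₀ := by unfold cc; positivity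
  have hQE : ∑ i, cc d C₀ * (8 * (zAbs (p i) : ℝ) ^ 2 / (L : ℝ) ^ 2) ≤ cc d C₀ * E := by
    rw [hE, Finset.mul_sum]
    exact Finset.sum_le_sum fun i _ => mul_le_mul_of_nonneg_left (one_sub_cos_ge _) hcpos.le
  have hE0 : 0 ≤ E := Finset.sum_nonneg fun i _ => by linarith [Real.cos_le_one (2 * Real.pi * (p i).valMinAbs / L)]
  have hE1 : E ≤ 2 * d := by
    refine (Finset.sum_le_sum (g := fun _ => (2 : ℝ)) fun i _ => ?_).trans ?_
    · linarith [Real.neg_one_le_cos (2 * Real.pi * (p i).valMinAbs / L)]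
    · simp; linarith
  have hs : sym lam p = 1 - 2 * bet d lam * E := by
    rw [hE, Finset.sum_sub_distrib]
    unfold sym
    rw [← Finset.mul_sum]
    simp only [Finset.sum_const, Finset.card_univ, Fintype.card_fin, nsmul_eq_mul]
    linear_combination alp_add_bet d lam
  have hab := alp_add_bet d lam
  have hca : cc d C₀ * d ≤ alp d lam := by
    unfold cc alp
    rw [one_div, one_div, mul_inv, mul_comm (d : ℝ)⁻¹, mul_assoc, inv_mul_cancel₀ (by positivity), mul_one]
    gcongr
  have hcb : cc d C₀ ≤ 2 * bet d lam := by
    unfold cc bet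
    rw [← mul_div_assoc, div_le_div_iff₀ (by positivity) (by positivity)]
    have : 0 ≤ (d : ℝ) * lam ^ 2 := by positivity
    have h8 : (d : ℝ) * (1 * 1) ≤ d * (d * (C₀ ^ 2 * lam ^ 2)) := by
      gcongr
      nlinarith
    nlinarith
  have hb := bet_nonneg d lam
  refine le_trans ?_ (sub_le_sub_left hQE 1)
  rw [abs_le, hs]
  constructor
  · have : (2 * bet d lam + cc d C₀) * E ≤ (2 * bet d lam + cc d C₀) * (2 * d) := by gcongr
    nlinarith
  · nlinarith

lemma abs_sym_le_exp {d L : ℕ} [NeZero L] (hd : 3 ≤ d) (C₀ : ℝ) (hC₀ : 1 ≤ C₀) (lam : ℝ)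
    (h1 : C₀⁻¹ ≤ lam) (h2 : lam ≤ C₀) (p : Fin d → ZMod L) (k : ℕ) :
    |sym lam p| ^ k ≤ ∏ i, Real.exp (-(k * (cc d C₀ * (8 * (zAbs (p i) : ℝ) ^ 2 / (L : ℝ) ^ 2)))) := by
  have h := abs_sym_le hd C₀ hC₀ lam h1 h2 p
  set Q := ∑ i, cc d C₀ * (8 * (zAbs (p i) : ℝ) ^ 2 / (L : ℝ) ^ 2) with hQ
  have h3 : |sym lam p| ≤ Real.exp (-Q) := by
    have := Real.add_one_le_exp (-Q); linarith
  refine (pow_le_pow_left₀ (abs_nonneg _) h3 k).trans ?_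
  rw [← Real.exp_nat_mul, ← Real.exp_sum, Finset.sum_neg_distrib, ← Finset.mul_sum, ← hQ]
  apply le_of_eq; congr 1; ring

lemma gauss_range (s : ℝ) (hs : 0 < s) (N : ℕ) :
    ∑ v ∈ Finset.range N, Real.exp (-(s * v) ^ 2) ≤ 1 + 2 / s := by
  have key : ∀ n : ℕ, ∑ v ∈ Finset.range (n + 1), Real.exp (-(s * v) ^ 2) ≤
      1 + 2 / s - 2 / s * (1 / (1 + s * n)) := by
    intro n
    induction n with
    | zero => simp
    | succ n ih =>
      rw [Finset.sum_range_succ]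
      have h1 : Real.exp (-(s * ((n + 1 : ℕ) : ℝ)) ^ 2) ≤
          2 / s * (1 / (1 + s * n)) - 2 / s * (1 / (1 + s * ((n + 1 : ℕ) : ℝ))) := by
        push_cast
        set x := s * ((n : ℝ) + 1) with hx
        have hxn : s * (n : ℝ) = x - s := by rw [hx]; ring
        have hx0 : 0 ≤ x - s := by rw [← hxn]; positivity
        have e1 : Real.exp (-x ^ 2) ≤ 1 / (1 + x ^ 2) := by
          rw [Real.exp_neg, one_div]
          gcongr
          linarith [Real.add_one_le_exp (x ^ 2)]
        have e2 : 2 / s * (1 / (1 + (x - s))) - 2 / s * (1 / (1 + x)) =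
            2 / ((1 + (x - s)) * (1 + x)) := by
          have : 1 + (x - s) ≠ 0 := by positivity
          have : 1 + x ≠ 0 := by linarith
          field_simp
          ring
        rw [hxn, e2]
        refine e1.trans ?_
        have hp : 0 < (1 + (x - s)) * (1 + x) := mul_pos (by linarith) (by linarith)
        rw [div_le_div_iff₀ (by positivity) hp]
        nlinarith [sq_nonneg (x - 1)]
      linarith
  rcases N with _ | n
  · simp; positivity
  · refine (key n).trans ?_
    have : 0 ≤ 2 / s * (1 / (1 + s * n)) := by positivity
    linarith

lemma sum_zmod_val {L : ℕ} [NeZero L] (f : ℕ → ℝ) :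
    ∑ z : ZMod L, f z.val = ∑ v ∈ Finset.range L, f v := by
  rcases L with _ | n
  · exact absurd rfl (NeZero.ne 0)
  · exact Fin.sum_univ_eq_sum_range f (n + 1)

lemma gauss_zmod {L : ℕ} [NeZero L] (s : ℝ) (hs : 0 < s) :
    ∑ z : ZMod L, Real.exp (-(s * zAbs z) ^ 2) ≤ 2 * (1 + 2 / s) := by
  have h1 : ∀ z : ZMod L, Real.exp (-(s * zAbs z) ^ 2) ≤
      Real.exp (-(s * z.val) ^ 2) + Real.exp (-(s * (-z).val) ^ 2) := by
    intro z
    rw [zAbs_eq_min]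
    rcases min_choice z.val (-z).val with h | h <;> rw [h]
    · linarith [Real.exp_pos (-(s * (-z).val) ^ 2)]
    · linarith [Real.exp_pos (-(s * z.val) ^ 2)]
  refine (Finset.sum_le_sum fun z _ => h1 z).trans ?_
  rw [Finset.sum_add_distrib]
  have h2 : ∑ z : ZMod L, Real.exp (-(s * (-z).val) ^ 2) = ∑ z : ZMod L, Real.exp (-(s * z.val) ^ 2) :=
    Fintype.sum_equiv (Equiv.neg _) _ _ fun z => by simp
  rw [h2, sum_zmod_val (fun v => Real.exp (-(s * v) ^ 2))]
  linarith [gauss_range s hs L]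

lemma cc_pos {d : ℕ} (hd : 3 ≤ d) (C₀ : ℝ) : 0 < cc d C₀ := by
  have hd' : (3 : ℝ) ≤ d := by exact_mod_cast hd
  unfold cc; positivity

lemma heat_diag {d L : ℕ} [NeZero L] (hd : 3 ≤ d) (C₀ : ℝ) (hC₀ : 1 ≤ C₀) (lam : ℝ)
    (h1 : C₀⁻¹ ≤ lam) (h2 : lam ≤ C₀) (k : ℕ) (hk : 0 < k) (a : Fin d → ZMod L) :
    heat lam k a ≤ (2 / L + 4 / (√(8 * cc d C₀) * √k)) ^ d := by
  have hc := cc_pos hd C₀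
  have hL : (0 : ℝ) < L := by exact_mod_cast NeZero.pos L
  have hk' : (0 : ℝ) < k := by exact_mod_cast hk
  set s : ℝ := √(8 * cc d C₀) * √k / L with hs
  have hs0 : 0 < s := by positivity
  have hss : s ^ 2 = 8 * cc d C₀ * k / L ^ 2 := by
    rw [hs, div_pow, mul_pow, Real.sq_sqrt (by positivity), Real.sq_sqrt (by positivity)]
  have e1 : heat lam k a ≤ ((L : ℝ) ^ d)⁻¹ * ∑ p : Fin d → ZMod L, |sym lam p| ^ k := by
    have : ‖(heat lam k a : ℂ)‖ = heat lam k a := by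
      rw [Complex.norm_real, Real.norm_of_nonneg (heat_nonneg _ _ _)]
    rw [← this, heat_fourier, Finset.mul_sum]
    refine (norm_sum_le _ _).trans (Finset.sum_le_sum fun p _ => ?_)
    rw [norm_mul, norm_mul, norm_eF, norm_inv, norm_pow, norm_pow, Complex.norm_real,
      Complex.norm_natCast, mul_one, Real.norm_eq_abs]
  have e2 : ∑ p : Fin d → ZMod L, |sym lam p| ^ k ≤ (2 * (1 + 2 / s)) ^ d := by
    calc _ ≤ ∑ p : Fin d → ZMod L, ∏ i, Real.exp (-(s * zAbs (p i)) ^ 2) := by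
          refine Finset.sum_le_sum fun p _ => ?_
          refine (abs_sym_le_exp hd C₀ hC₀ lam h1 h2 p k).trans (le_of_eq ?_)
          refine Finset.prod_congr rfl fun i _ => ?_
          congr 1
          rw [mul_pow, hss]
          ring
      _ = (∑ z : ZMod L, Real.exp (-(s * zAbs z) ^ 2)) ^ d := by
          rw [Fintype.sum_pow]
      _ ≤ _ := by
          refine pow_le_pow_left₀ (Finset.sum_nonneg fun z _ => (Real.exp_pos _).le)
            (gauss_zmod s hs0) d
  refine e1.trans ((mul_le_mul_of_nonneg_left e2 (by positivity)).trans (le_of_eq ?_))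
  rw [← inv_pow, ← mul_pow]
  congr 1
  rw [hs]
  have : √(8 * cc d C₀) ≠ 0 := by positivity
  have : √(k : ℝ) ≠ 0 := by positivity
  field_simp
  ring

lemma R_le {d L : ℕ} [NeZero L] (a : Fin d → ZMod L) :
    (torusDist 0 a : ℝ) + 1 ≤ (d + 1) * L := by
  have h1 : torusDist 0 a ≤ d * L := by
    rw [torusDist_eq]
    refine (Finset.sum_le_sum (g := fun _ => L) fun i _ => ?_).trans (by simp)
    have := zAbs_le_half ((0 : Fin d → ZMod L) i - a i)
    omega
  have h2 : 1 ≤ L := NeZero.pos L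
  have : torusDist 0 a + 1 ≤ (d + 1) * L := by nlinarith
  exact_mod_cast this

lemma exists_coord {d L : ℕ} [NeZero L] (a : Fin d → ZMod L) (h : torusDist 0 a ≠ 0) :
    ∃ i, (torusDist 0 a : ℝ) + 1 ≤ (d + 1) * zAbs (a i) := by
  have hT : torusDist 0 a = ∑ i, zAbs (a i) := by
    rw [torusDist_eq]
    exact Finset.sum_congr rfl fun i _ => by simp [zAbs_neg]
  have hne : (Finset.univ : Finset (Fin d)).Nonempty := by
    by_contra hc
    rw [Finset.not_nonempty_iff_eq_empty] at hc
    rw [hT, hc] at h; simp at h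
  obtain ⟨i, -, hi⟩ := Finset.exists_max_image Finset.univ (fun i => zAbs (a i)) hne
  refine ⟨i, ?_⟩
  have h1 : torusDist 0 a ≤ d * zAbs (a i) := by
    rw [hT]
    exact (Finset.sum_le_sum fun j hj => hi j hj).trans (by simp)
  have h2 : 1 ≤ zAbs (a i) := by
    by_contra hc
    have : zAbs (a i) = 0 := by omega
    rw [this] at h1; omega
  have : torusDist 0 a + 1 ≤ (d + 1) * zAbs (a i) := by nlinarith
  exact_mod_cast this

lemma exp_neg_le (x : ℝ) (hx : 0 < x) (n : ℕ) : Real.exp (-x) ≤ n.factorial / x ^ n := by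
  have h := Real.pow_div_factorial_le_exp x hx.le n
  have h3 : (0 : ℝ) < n.factorial := by exact_mod_cast n.factorial_pos
  rw [Real.exp_neg, ← inv_div]
  exact inv_anti₀ (by positivity) h

/-- constant in the pointwise bound -/
noncomputable def C1 (d : ℕ) (C₀ : ℝ) : ℝ := 2 + 4 / √(8 * cc d C₀)

lemma heat_caseA {e L : ℕ} [NeZero L] (he : 3 ≤ e + 2) (C₀ : ℝ) (hC₀ : 1 ≤ C₀) (lam : ℝ)
    (h1 : C₀⁻¹ ≤ lam) (h2 : lam ≤ C₀) (k : ℕ) (hk : 0 < k) (a : Fin (e + 2) → ZMod L)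
    (Y R : ℝ) (hY : 1 ≤ Y) (hkY : (k : ℝ) ≤ L ^ 2 * Y ^ 2) (hR0 : 0 < R) (hR : R ^ 2 ≤ k * Y ^ 2) :
    heat lam k a ≤ C1 (e + 2) C₀ ^ (e + 2) * Y ^ (2 * (e + 2)) * ((k : ℝ)⁻¹ * (R ^ e)⁻¹) := by
  have hc := cc_pos he C₀
  have hL : (0 : ℝ) < L := by exact_mod_cast NeZero.pos L
  have hk' : (0 : ℝ) < k := by exact_mod_cast hk
  set s := √(k : ℝ) with hs
  have hs0 : 0 < s := by positivity
  have hss : s ^ 2 = k := Real.sq_sqrt hk'.le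
  rw [← hss] at hkY hR ⊢
  have hsLY : s ≤ L * Y := by
    rw [← mul_pow] at hkY
    exact le_of_sq_le_sq hkY (by positivity)
  have hRs : R ≤ s * Y := by
    rw [← mul_pow] at hR
    exact le_of_sq_le_sq hR (by positivity)
  have hC1 : 0 < C1 (e + 2) C₀ := by unfold C1; positivity
  have b1 : 2 / (L : ℝ) + 4 / (√(8 * cc (e + 2) C₀) * s) ≤ C1 (e + 2) C₀ * (Y / s) := by
    unfold C1
    rw [add_mul]
    apply add_le_add
    · rw [← mul_div_assoc, div_le_div_iff₀ hL hs0]; nlinarith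
    · rw [← div_div, mul_div_assoc']
      apply div_le_div_of_nonneg_right _ hs0.le
      exact le_mul_of_one_le_right (by positivity) hY
  refine (heat_diag he C₀ hC₀ lam h1 h2 k hk a).trans ?_
  refine (pow_le_pow_left₀ (by positivity) b1 _).trans ?_
  rw [mul_pow, mul_assoc]
  refine mul_le_mul_of_nonneg_left ?_ (by positivity)
  have b2 : (s ^ e)⁻¹ ≤ Y ^ e * (R ^ e)⁻¹ := by
    rw [← div_eq_mul_inv, ← div_pow, ← inv_pow]
    refine pow_le_pow_left₀ (by positivity) ?_ e
    rw [← one_div, div_le_div_iff₀ hs0 hR0]; linarith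
  have b3 : (Y / s) ^ (e + 2) = Y ^ (e + 2) * (s ^ 2)⁻¹ * (s ^ e)⁻¹ := by
    rw [div_pow, pow_add s e 2]; field_simp
  rw [b3]
  calc _ ≤ Y ^ (e + 2) * (s ^ 2)⁻¹ * (Y ^ e * (R ^ e)⁻¹) := by gcongr
    _ = Y ^ (2 * e + 2) * ((s ^ 2)⁻¹ * (R ^ e)⁻¹) := by ring
    _ ≤ Y ^ (2 * (e + 2)) * ((s ^ 2)⁻¹ * (R ^ e)⁻¹) := by
        gcongr
        omega

lemma heat_caseB {e L : ℕ} [NeZero L] (lam : ℝ) (k : ℕ) (hk : 0 < k) (a : Fin (e + 2) → ZMod L)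
    (Y : ℝ) (hY : 1 ≤ Y) (n : ℕ) (hn : (L : ℝ) ^ (e + 2) ≤ (Y ^ 2) ^ n)
    (hR : k * Y ^ 2 ≤ ((torusDist 0 a : ℝ) + 1) ^ 2) :
    heat lam k a ≤ (2 * (n.factorial * (2 * (e + 3) ^ 2) ^ n) * (e + 3) ^ (e + 2)) *
      ((k : ℝ)⁻¹ * (((torusDist 0 a : ℝ) + 1) ^ e)⁻¹) ∨ torusDist 0 a = 0 := by
  by_cases h0 : torusDist 0 a = 0
  · right; exact h0
  left
  obtain ⟨i, hi⟩ := exists_coord a h0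
  have hRL := R_le a
  push_cast at hi hRL
  have hL : (0 : ℝ) < L := by exact_mod_cast NeZero.pos L
  have hk' : (0 : ℝ) < k := by exact_mod_cast hk
  set R : ℝ := (torusDist 0 a : ℝ) + 1 with hRdef
  have hR0 : 0 < R := by positivity
  set m : ℝ := (zAbs (a i) : ℝ) with hm
  have hm0 : 0 ≤ m := by positivity
  have hx : Y ^ 2 / (2 * ((e : ℝ) + 3) ^ 2) ≤ m ^ 2 / (2 * k) := by
    rw [div_le_div_iff₀ (by positivity) (by positivity)]
    have : R ^ 2 ≤ (((e : ℝ) + 2 + 1) * m) ^ 2 := by gcongr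
    nlinarith
  have hx0 : 0 < Y ^ 2 / (2 * ((e : ℝ) + 3) ^ 2) := by positivity
  have h1 : Real.exp (-(m ^ 2 / (2 * k))) ≤ n.factorial * (2 * ((e : ℝ) + 3) ^ 2) ^ n * ((L : ℝ) ^ (e + 2))⁻¹ := by
    refine (Real.exp_le_exp.2 (neg_le_neg hx)).trans ((exp_neg_le _ hx0 n).trans ?_)
    rw [div_pow, div_div_eq_mul_div, div_eq_mul_inv]
    gcongr
  have h2 : ((L : ℝ) ^ (e + 2))⁻¹ ≤ ((e : ℝ) + 3) ^ (e + 2) * ((k : ℝ)⁻¹ * (R ^ e)⁻¹) := by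
    rw [← mul_inv, ← div_eq_mul_inv, ← one_div, div_le_div_iff₀ (by positivity) (by positivity), one_mul,
      ← mul_pow]
    have hkR : (k : ℝ) ≤ R ^ 2 :=
      le_trans (le_mul_of_one_le_right hk'.le (one_le_pow₀ hY)) hR
    calc (k : ℝ) * R ^ e ≤ R ^ 2 * R ^ e := by gcongr
      _ = R ^ (e + 2) := by ring
      _ ≤ _ := by
        refine pow_le_pow_left₀ hR0.le ?_ _
        linarith
  refine (heat_offdiag lam i k hk a).trans ?_
  calc _ ≤ 2 * (n.factorial * (2 * ((e : ℝ) + 3) ^ 2) ^ n * ((L : ℝ) ^ (e + 2))⁻¹) := by gcongr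
    _ ≤ 2 * (n.factorial * (2 * ((e : ℝ) + 3) ^ 2) ^ n * (((e : ℝ) + 3) ^ (e + 2) * ((k : ℝ)⁻¹ * (R ^ e)⁻¹))) := by gcongr
    _ = _ := by ring

/-- constant of the pointwise bound -/
noncomputable def C2 (e n : ℕ) (C₀ : ℝ) : ℝ :=
  C1 (e + 2) C₀ ^ (e + 2) + 2 * (n.factorial * (2 * ((e : ℝ) + 3) ^ 2) ^ n) * ((e : ℝ) + 3) ^ (e + 2)

lemma C1_pos (d : ℕ) (C₀ : ℝ) : 0 < C1 d C₀ := by unfold C1; positivity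

lemma C2_pos (e n : ℕ) (C₀ : ℝ) : 0 < C2 e n C₀ := by
  unfold C2; have := C1_pos (e + 2) C₀; positivity

lemma heat_point {e L : ℕ} [NeZero L] (he : 3 ≤ e + 2) (C₀ : ℝ) (hC₀ : 1 ≤ C₀) (lam : ℝ)
    (h1 : C₀⁻¹ ≤ lam) (h2 : lam ≤ C₀) (k : ℕ) (hk : 0 < k) (a : Fin (e + 2) → ZMod L)
    (Y : ℝ) (hY : 1 ≤ Y) (n : ℕ) (hn : (L : ℝ) ^ (e + 2) ≤ (Y ^ 2) ^ n)
    (hkY : (k : ℝ) ≤ L ^ 2 * Y ^ 2) :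
    heat lam k a ≤ C2 e n C₀ * Y ^ (2 * (e + 2)) *
      ((k : ℝ)⁻¹ * (((torusDist 0 a : ℝ) + 1) ^ e)⁻¹) := by
  have hk' : (1 : ℝ) ≤ k := by exact_mod_cast hk
  have hC1 := C1_pos (e + 2) C₀
  by_cases hA : ((torusDist 0 a : ℝ) + 1) ^ 2 ≤ k * Y ^ 2
  · refine (heat_caseA he C₀ hC₀ lam h1 h2 k hk a Y _ hY hkY (by positivity) hA).trans ?_
    unfold C2
    gcongr
    exact le_add_of_nonneg_right (by positivity)
  · push Not at hA
    rcases heat_caseB lam k hk a Y hY n hn hA.le with h | h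
    · refine h.trans ?_
      refine mul_le_mul_of_nonneg_right ?_ (by positivity)
      have hY2 : 1 ≤ Y ^ (2 * (e + 2)) := one_le_pow₀ hY
      refine le_trans ?_ (le_mul_of_one_le_right (C2_pos e n C₀).le hY2)
      unfold C2
      exact le_add_of_nonneg_left (by positivity)
    · rw [h] at hA
      norm_num at hA
      nlinarith

lemma sym_gap {d L : ℕ} [NeZero L] (hd : 3 ≤ d) (C₀ : ℝ) (hC₀ : 1 ≤ C₀) (lam : ℝ)
    (h1 : C₀⁻¹ ≤ lam) (h2 : lam ≤ C₀) (p : Fin d → ZMod L) (hp : p ≠ 0) :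
    |sym lam p| ≤ 1 - 8 * cc d C₀ / (L : ℝ) ^ 2 := by
  have hc := cc_pos hd C₀
  have hL : (0 : ℝ) < L := by exact_mod_cast NeZero.pos L
  refine (abs_sym_le hd C₀ hC₀ lam h1 h2 p).trans (sub_le_sub_left ?_ 1)
  have : ∃ i, p i ≠ 0 := by
    by_contra! hc; exact hp (funext hc)
  obtain ⟨i, hi⟩ := this
  have h3 : (1 : ℝ) ≤ zAbs (p i) := by
    have : zAbs (p i) ≠ 0 := fun h => hi ((zAbs_eq_zero _).1 h)
    exact_mod_cast Nat.one_le_iff_ne_zero.2 this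
  refine le_trans ?_ (Finset.single_le_sum
    (f := fun i => cc d C₀ * (8 * (zAbs (p i) : ℝ) ^ 2 / (L : ℝ) ^ 2))
    (fun i _ => by positivity) (Finset.mem_univ i))
  have h4 : (1 : ℝ) ≤ (zAbs (p i) : ℝ) ^ 2 := one_le_pow₀ h3
  calc 8 * cc d C₀ / (L : ℝ) ^ 2 = cc d C₀ * (8 * 1 / (L : ℝ) ^ 2) := by ring
    _ ≤ _ := by gcongr

lemma decomp {d L : ℕ} [NeZero L] (hL : 3 ≤ L) (lam t : ℝ) (ht : 0 ≤ t) (ht1 : t < 1)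
    (a : Fin d → ZMod L) (K : ℕ) :
    ThetaB d L lam (t : ℂ) 0 a - ((L : ℂ) ^ (2 * d))⁻¹ *
        ∑ a' : Fin d → ZMod L, ∑ b' : Fin d → ZMod L, ThetaB d L lam (t : ℂ) a' b' =
      ∑ k ∈ Finset.range K, (t : ℂ) ^ k * ((heat lam k a : ℂ) - ((L : ℂ) ^ d)⁻¹) +
      ((L : ℂ) ^ d)⁻¹ * ∑ p ∈ Finset.univ.erase (0 : Fin d → ZMod L),
        ((t : ℂ) * sym lam p) ^ K * (1 - (t : ℂ) * sym lam p)⁻¹ * eF p a := by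
  have hL0 : (L : ℂ) ≠ 0 := by exact_mod_cast NeZero.ne L
  have s1 : ((L : ℂ) ^ (2 * d))⁻¹ *
        ∑ a' : Fin d → ZMod L, ∑ b' : Fin d → ZMod L, ThetaB d L lam (t : ℂ) a' b' =
      ((L : ℂ) ^ d)⁻¹ * (1 - (t : ℂ))⁻¹ := by
    simp_rw [Theta_sum hL lam t ht ht1]
    simp only [Finset.sum_const, Finset.card_univ, Fintype.card_pi, ZMod.card, Finset.prod_const,
      Fintype.card_fin, nsmul_eq_mul]
    push_cast
    rw [two_mul, pow_add]
    field_simp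
  have s2 : ThetaB d L lam (t : ℂ) 0 a = ((L : ℂ) ^ d)⁻¹ * (1 - (t : ℂ))⁻¹ +
      ((L : ℂ) ^ d)⁻¹ * ∑ p ∈ Finset.univ.erase (0 : Fin d → ZMod L),
        (1 - (t : ℂ) * sym lam p)⁻¹ * eF p a := by
    rw [Theta_eq hL lam t ht ht1]
    simp only [Gmat, Matrix.of_apply, sub_zero]
    rw [← Finset.add_sum_erase _ _ (Finset.mem_univ (0 : Fin d → ZMod L)), sym_zero, eF_zero_left,
      Finset.mul_sum]
    simp [mul_assoc]
  have s3 : ∀ k, (heat lam k a : ℂ) - ((L : ℂ) ^ d)⁻¹ = ((L : ℂ) ^ d)⁻¹ *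
      ∑ p ∈ Finset.univ.erase (0 : Fin d → ZMod L), (sym lam p : ℂ) ^ k * eF p a := by
    intro k
    rw [heat_fourier, ← Finset.add_sum_erase _ _ (Finset.mem_univ (0 : Fin d → ZMod L)), sym_zero,
      eF_zero_left, Finset.mul_sum]
    simp [mul_assoc]
  rw [s1, s2, add_sub_cancel_left]
  simp_rw [s3]
  have s4 : ∑ k ∈ Finset.range K, (t : ℂ) ^ k * (((L : ℂ) ^ d)⁻¹ *
      ∑ p ∈ Finset.univ.erase (0 : Fin d → ZMod L), (sym lam p : ℂ) ^ k * eF p a) =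
      ((L : ℂ) ^ d)⁻¹ * ∑ p ∈ Finset.univ.erase (0 : Fin d → ZMod L),
        (∑ k ∈ Finset.range K, ((t : ℂ) * sym lam p) ^ k) * eF p a := by
    simp_rw [Finset.sum_mul]
    rw [Finset.sum_comm, Finset.mul_sum]
    refine Finset.sum_congr rfl fun k _ => ?_
    rw [mul_left_comm, Finset.mul_sum]
    congr 1
    refine Finset.sum_congr rfl fun p _ => ?_
    rw [mul_pow]; ring
  rw [s4, ← mul_add, ← Finset.sum_add_distrib]
  congr 1
  refine Finset.sum_congr rfl fun p _ => ?_
  rw [← add_mul]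
  congr 1
  have h := one_sub_t_sym_ne lam t ht ht1 p
  have g := mul_neg_geom_sum ((t : ℂ) * sym lam p) K
  have g' : ∑ i ∈ Finset.range K, ((t : ℂ) * sym lam p) ^ i =
      (1 - ((t : ℂ) * sym lam p) ^ K) * (1 - (t : ℂ) * sym lam p)⁻¹ := by
    rw [← g]; field_simp
  rw [g']; ring

lemma rem_bound {d L : ℕ} [NeZero L] (hd : 3 ≤ d) (C₀ : ℝ) (hC₀ : 1 ≤ C₀) (lam : ℝ)
    (h1 : C₀⁻¹ ≤ lam) (h2 : lam ≤ C₀) (t : ℝ) (ht : 0 ≤ t) (ht1 : t < 1)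
    (a : Fin d → ZMod L) (K : ℕ) :
    ‖((L : ℂ) ^ d)⁻¹ * ∑ p ∈ Finset.univ.erase (0 : Fin d → ZMod L),
        ((t : ℂ) * sym lam p) ^ K * (1 - (t : ℂ) * sym lam p)⁻¹ * eF p a‖ ≤
      Real.exp (-(8 * cc d C₀ * (K / (L : ℝ) ^ 2))) * ((L : ℝ) ^ 2 / (8 * cc d C₀)) := by
  have hc := cc_pos hd C₀
  have hL : (0 : ℝ) < L := by exact_mod_cast NeZero.pos L
  set B := Real.exp (-(8 * cc d C₀ * (K / (L : ℝ) ^ 2))) * ((L : ℝ) ^ 2 / (8 * cc d C₀)) with hB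
  have hB0 : 0 ≤ B := by positivity
  have hterm : ∀ p ∈ Finset.univ.erase (0 : Fin d → ZMod L),
      ‖((t : ℂ) * sym lam p) ^ K * (1 - (t : ℂ) * sym lam p)⁻¹ * eF p a‖ ≤ B := by
    intro p hp
    have hgap := sym_gap hd C₀ hC₀ lam h1 h2 p (Finset.ne_of_mem_erase hp)
    set g := 8 * cc d C₀ / (L : ℝ) ^ 2 with hg
    have hg0 : 0 < g := by positivity
    have hts : |t * sym lam p| ≤ 1 - g := by
      rw [abs_mul, abs_of_nonneg ht]
      have := abs_nonneg (sym lam p)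
      nlinarith
    rw [norm_mul, norm_eF, mul_one, norm_mul, norm_pow, norm_inv]
    have c1 : ‖(t : ℂ) * sym lam p‖ = |t * sym lam p| := by
      rw [← Complex.ofReal_mul, Complex.norm_real, Real.norm_eq_abs]
    have c2 : ‖1 - (t : ℂ) * sym lam p‖ = |1 - t * sym lam p| := by
      rw [← Complex.ofReal_mul, ← Complex.ofReal_one, ← Complex.ofReal_sub, Complex.norm_real,
        Real.norm_eq_abs]
    rw [c1, c2]
    have c3 : g ≤ |1 - t * sym lam p| := by
      refine le_trans ?_ (le_abs_self _)
      have := (abs_le.1 hts).2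
      linarith
    have c4 : |t * sym lam p| ^ K ≤ Real.exp (-(8 * cc d C₀ * (K / (L : ℝ) ^ 2))) := by
      have : |t * sym lam p| ≤ Real.exp (-g) := by
        have := Real.add_one_le_exp (-g); linarith
      refine (pow_le_pow_left₀ (abs_nonneg _) this K).trans (le_of_eq ?_)
      rw [← Real.exp_nat_mul]; congr 1; rw [hg]; ring
    have c5 : |1 - t * sym lam p|⁻¹ ≤ (L : ℝ) ^ 2 / (8 * cc d C₀) := by
      refine (inv_anti₀ hg0 c3).trans (le_of_eq ?_)
      rw [hg, inv_div]
    rw [hB]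
    gcongr
  rw [norm_mul, norm_inv, norm_pow, Complex.norm_natCast]
  have hsum : ‖∑ p ∈ Finset.univ.erase (0 : Fin d → ZMod L),
        ((t : ℂ) * sym lam p) ^ K * (1 - (t : ℂ) * sym lam p)⁻¹ * eF p a‖ ≤ (L : ℝ) ^ d * B := by
    refine (norm_sum_le_of_le _ hterm).trans ?_
    rw [Finset.sum_const, nsmul_eq_mul]
    refine mul_le_mul_of_nonneg_right ?_ hB0
    have : (Finset.univ.erase (0 : Fin d → ZMod L)).card ≤ L ^ d := by
      refine (Finset.card_erase_le).trans ?_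
      simp
    exact_mod_cast this
  calc _ ≤ ((L : ℝ) ^ d)⁻¹ * ((L : ℝ) ^ d * B) := by gcongr
    _ = B := by field_simp

lemma sum_inv_le (K : ℕ) (X : ℝ) (hX : 1 ≤ X) (hK : (K : ℝ) ≤ X) :
    ∑ k ∈ Finset.range K, ((k + 1 : ℕ) : ℝ)⁻¹ ≤ 1 + Real.log X := by
  have h := harmonic_le_one_add_log K
  have h2 : ((harmonic K : ℚ) : ℝ) = ∑ k ∈ Finset.range K, ((k + 1 : ℕ) : ℝ)⁻¹ := by
    simp [harmonic]
  rw [← h2]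
  refine h.trans ?_
  rcases Nat.eq_zero_or_pos K with h0 | h0
  · subst h0; simp [Real.log_nonneg hX]
  · have : (0 : ℝ) < K := by exact_mod_cast h0
    gcongr

lemma big_L {e L : ℕ} [NeZero L] (he : 3 ≤ e + 2) (hL : 3 ≤ L) (C₀ : ℝ) (hC₀ : 1 ≤ C₀) (lam : ℝ)
    (h1 : C₀⁻¹ ≤ lam) (h2 : lam ≤ C₀) (t : ℝ) (ht : 0 ≤ t) (ht1 : t < 1)
    (a : Fin (e + 2) → ZMod L)
    (Y : ℝ) (hY : 1 ≤ Y) (n : ℕ) (hn : (L : ℝ) ^ (e + 2) ≤ (Y ^ 2) ^ n) (A : ℝ) (hA : 1 ≤ A)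
    (hlog : 1 + Real.log (L ^ 2 * Y ^ 2) ≤ A * Y) :
    ‖ThetaB (e + 2) L lam (t : ℂ) 0 a - ((L : ℂ) ^ (2 * (e + 2)))⁻¹ *
        ∑ a' : Fin (e + 2) → ZMod L, ∑ b' : Fin (e + 2) → ZMod L,
          ThetaB (e + 2) L lam (t : ℂ) a' b'‖ ≤
      (1 + C2 e n C₀ * A + 2 * (e + 3) ^ e +
        n.factorial / (8 * cc (e + 2) C₀) ^ (n + 1) * (e + 3) ^ e) * Y ^ (2 * (e + 2) + 2) *
        (((torusDist 0 a : ℝ) + 1) ^ e)⁻¹ := by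
  have hc := cc_pos he C₀
  have hL0 : (0 : ℝ) < L := by exact_mod_cast NeZero.pos L
  have hL1 : (1 : ℝ) ≤ L := by exact_mod_cast NeZero.pos L
  have hRL := R_le a
  push_cast at hRL
  set R : ℝ := (torusDist 0 a : ℝ) + 1 with hRdef
  have hR0 : 0 < R := by positivity
  set X : ℝ := (L : ℝ) ^ 2 * Y ^ 2 with hX
  have hX1 : 1 ≤ X := by
    have := one_le_pow₀ hL1 (n := 2)
    have := one_le_pow₀ hY (n := 2)
    nlinarith
  obtain ⟨K, hK⟩ : ∃ K, ⌈X⌉₊ = K + 1 :=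
    Nat.exists_eq_succ_of_ne_zero (Nat.ceil_pos.2 (by linarith)).ne'
  have hKX : (K : ℝ) ≤ X := (Nat.lt_ceil.1 (by omega)).le
  have hXK : X ≤ ((K + 1 : ℕ) : ℝ) := by rw [← hK]; exact Nat.le_ceil X
  have hLR : ((L : ℝ) ^ e)⁻¹ ≤ ((e : ℝ) + 3) ^ e * (R ^ e)⁻¹ := by
    rw [← div_eq_mul_inv, ← div_pow, ← inv_pow]
    refine pow_le_pow_left₀ (by positivity) ?_ e
    rw [← one_div, div_le_div_iff₀ hL0 hR0]; linarith
  have hYm : ∀ j, j ≤ 2 * (e + 2) + 2 → Y ^ j ≤ Y ^ (2 * (e + 2) + 2) := fun j hj =>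
    pow_le_pow_right₀ hY hj
  set Z := Y ^ (2 * (e + 2) + 2) with hZ
  have hZ1 : 1 ≤ Z := one_le_pow₀ hY
  rw [decomp hL lam t ht ht1 a (K + 1)]
  refine (norm_add_le _ _).trans ?_
  have hrem := rem_bound he C₀ hC₀ lam h1 h2 t ht ht1 a (K + 1)
  -- remainder
  have hrem2 : Real.exp (-(8 * cc (e + 2) C₀ * (((K + 1 : ℕ) : ℝ) / (L : ℝ) ^ 2))) *
      ((L : ℝ) ^ 2 / (8 * cc (e + 2) C₀)) ≤
      n.factorial / (8 * cc (e + 2) C₀) ^ (n + 1) * (e + 3) ^ e * (R ^ e)⁻¹ := by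
    have r1 : 8 * cc (e + 2) C₀ * Y ^ 2 ≤ 8 * cc (e + 2) C₀ * (((K + 1 : ℕ) : ℝ) / (L : ℝ) ^ 2) := by
      gcongr
      rw [le_div_iff₀ (by positivity)]
      linarith
    have r2 : Real.exp (-(8 * cc (e + 2) C₀ * (((K + 1 : ℕ) : ℝ) / (L : ℝ) ^ 2))) ≤
        n.factorial / ((8 * cc (e + 2) C₀) ^ n * (L : ℝ) ^ (e + 2)) := by
      refine (Real.exp_le_exp.2 (neg_le_neg r1)).trans ((exp_neg_le _ (by positivity) n).trans ?_)
      rw [mul_pow]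
      gcongr
    calc _ ≤ n.factorial / ((8 * cc (e + 2) C₀) ^ n * (L : ℝ) ^ (e + 2)) *
          ((L : ℝ) ^ 2 / (8 * cc (e + 2) C₀)) := by gcongr
      _ = n.factorial / (8 * cc (e + 2) C₀) ^ (n + 1) * ((L : ℝ) ^ e)⁻¹ := by
          rw [pow_add (L : ℝ) e 2, pow_succ (8 * cc (e + 2) C₀)]; field_simp
      _ ≤ n.factorial / (8 * cc (e + 2) C₀) ^ (n + 1) * (((e : ℝ) + 3) ^ e * (R ^ e)⁻¹) := by
          gcongr
      _ = _ := by ring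
  have hF : (0 : ℝ) ≤ n.factorial / (8 * cc (e + 2) C₀) ^ (n + 1) * (e + 3) ^ e := by positivity
  -- main sum
  have hmain : ‖∑ k ∈ Finset.range (K + 1), (t : ℂ) ^ k * ((heat lam k a : ℂ) - ((L : ℂ) ^ (e + 2))⁻¹)‖ ≤
      ∑ k ∈ Finset.range (K + 1), (heat lam k a + ((L : ℝ) ^ (e + 2))⁻¹) := by
    refine norm_sum_le_of_le _ fun k _ => ?_
    rw [norm_mul, norm_pow, Complex.norm_real, Real.norm_of_nonneg ht]
    have b1 : ‖(heat lam k a : ℂ) - ((L : ℂ) ^ (e + 2))⁻¹‖ ≤ heat lam k a + ((L : ℝ) ^ (e + 2))⁻¹ := by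
      refine (norm_sub_le _ _).trans (le_of_eq ?_)
      rw [Complex.norm_real, Real.norm_of_nonneg (heat_nonneg _ _ _), norm_inv, norm_pow,
        Complex.norm_natCast]
    have b2 : t ^ k ≤ 1 := pow_le_one₀ ht ht1.le
    calc _ ≤ 1 * ‖(heat lam k a : ℂ) - ((L : ℂ) ^ (e + 2))⁻¹‖ := by gcongr
      _ ≤ _ := by rw [one_mul]; exact b1
  have hheat0 : heat lam 0 a ≤ (R ^ e)⁻¹ := by
    unfold heat
    split_ifs with h0
    · rw [hRdef, h0, torusDist_self]; simp
    · positivity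
  have hheat : ∑ k ∈ Finset.range K, heat lam (k + 1) a ≤
      C2 e n C₀ * A * Z * (R ^ e)⁻¹ := by
    have hC2 := C2_pos e n C₀
    calc _ ≤ ∑ k ∈ Finset.range K, C2 e n C₀ * Y ^ (2 * (e + 2)) *
          (((k + 1 : ℕ) : ℝ)⁻¹ * (R ^ e)⁻¹) := by
          refine Finset.sum_le_sum fun k hk => ?_
          refine heat_point he C₀ hC₀ lam h1 h2 (k + 1) (by omega) a Y hY n hn ?_
          refine le_trans ?_ hKX
          have := Finset.mem_range.1 hk
          exact_mod_cast this
      _ = C2 e n C₀ * Y ^ (2 * (e + 2)) * (R ^ e)⁻¹ * ∑ k ∈ Finset.range K, ((k + 1 : ℕ) : ℝ)⁻¹ := by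
          rw [Finset.mul_sum]
          exact Finset.sum_congr rfl fun k _ => by ring
      _ ≤ C2 e n C₀ * Y ^ (2 * (e + 2)) * (R ^ e)⁻¹ * (A * Y) := by
          gcongr
          exact (sum_inv_le K X hX1 hKX).trans hlog
      _ = C2 e n C₀ * A * Y ^ (2 * (e + 2) + 1) * (R ^ e)⁻¹ := by ring
      _ ≤ _ := by
          gcongr
          exact hYm _ (by omega)
  have hconst : ((K + 1 : ℕ) : ℝ) * ((L : ℝ) ^ (e + 2))⁻¹ ≤ 2 * (e + 3) ^ e * Z * (R ^ e)⁻¹ := by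
    calc _ ≤ (2 * X) * ((L : ℝ) ^ (e + 2))⁻¹ := by
          gcongr
          push_cast; linarith
      _ = 2 * Y ^ 2 * ((L : ℝ) ^ e)⁻¹ := by
          rw [hX, pow_add (L : ℝ) e 2]; field_simp
      _ ≤ 2 * Z * (((e : ℝ) + 3) ^ e * (R ^ e)⁻¹) := by
          gcongr
          exact hYm _ (by omega)
      _ = _ := by ring
  have hsum : ∑ k ∈ Finset.range (K + 1), (heat lam k a + ((L : ℝ) ^ (e + 2))⁻¹) ≤
      (R ^ e)⁻¹ + C2 e n C₀ * A * Z * (R ^ e)⁻¹ + 2 * (e + 3) ^ e * Z * (R ^ e)⁻¹ := by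
    rw [Finset.sum_add_distrib, Finset.sum_range_succ', Finset.sum_const, Finset.card_range,
      nsmul_eq_mul]
    linarith
  have hRi : 0 ≤ (R ^ e)⁻¹ := by positivity
  have z1 : (R ^ e)⁻¹ ≤ Z * (R ^ e)⁻¹ := le_mul_of_one_le_left hRi hZ1
  have z2 : n.factorial / (8 * cc (e + 2) C₀) ^ (n + 1) * (e + 3) ^ e * (R ^ e)⁻¹ ≤
      n.factorial / (8 * cc (e + 2) C₀) ^ (n + 1) * (e + 3) ^ e * (Z * (R ^ e)⁻¹) :=
    mul_le_mul_of_nonneg_left z1 hF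
  calc _ ≤ ((R ^ e)⁻¹ + C2 e n C₀ * A * Z * (R ^ e)⁻¹ + 2 * (e + 3) ^ e * Z * (R ^ e)⁻¹) +
        n.factorial / (8 * cc (e + 2) C₀) ^ (n + 1) * (e + 3) ^ e * (R ^ e)⁻¹ :=
        add_le_add (hmain.trans hsum) (hrem.trans hrem2)
    _ ≤ (Z * (R ^ e)⁻¹ + C2 e n C₀ * A * Z * (R ^ e)⁻¹ + 2 * (e + 3) ^ e * Z * (R ^ e)⁻¹) +
        n.factorial / (8 * cc (e + 2) C₀) ^ (n + 1) * (e + 3) ^ e * (Z * (R ^ e)⁻¹) := by linarith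
    _ = _ := by ring

lemma row_two {d : ℕ} (lam : ℝ) (a : Fin d → ZMod 2) :
    ∑ b, ‖SBmat d 2 lam a b‖ ≤ 1 - d * bet d lam := by
  have ha := alp_nonneg d lam
  have hb := bet_nonneg d lam
  have h : ∀ b, ‖SBmat d 2 lam a b‖ ≤ alp d lam * (if b = a then 1 else 0) + bet d lam *
      ∑ i : Fin d, (if b = a + eV i then (1 : ℝ) else 0) := by
    intro b
    have hs : 0 ≤ ∑ i : Fin d, (if b = a + eV i then (1 : ℝ) else 0) :=
      Finset.sum_nonneg fun i _ => by split_ifs <;> norm_num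
    unfold SBmat
    rw [Matrix.of_apply]
    split_ifs with h1 h2 h3 h4 h5
    · rw [Complex.norm_real]
      change ‖alp d lam‖ ≤ _
      rw [Real.norm_of_nonneg ha]
      have := mul_nonneg hb hs
      linarith
    · exact absurd h1.symm h2
    · exact absurd h4.symm h1
    · obtain ⟨i, hi⟩ := torusDist_one a b h3
      have hi' : b = a + eV i := by
        rcases hi with hi | hi
        · exact hi
        · rw [hi]; funext j
          simp only [Pi.sub_apply, Pi.add_apply]
          exact CharTwo.sub_eq_add _ _
      have h6 : (1 : ℝ) ≤ ∑ i : Fin d, (if b = a + eV i then (1 : ℝ) else 0) := by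
        refine le_trans ?_ (Finset.single_le_sum (f := fun i => if b = a + eV i then (1 : ℝ) else 0)
          (fun i _ => by split_ifs <;> norm_num) (Finset.mem_univ i))
        simp [hi']
      have h7 := mul_le_mul_of_nonneg_left h6 hb
      rw [Complex.norm_real]
      change ‖bet d lam‖ ≤ _
      rw [Real.norm_of_nonneg hb]
      linarith
    · rw [norm_zero]; positivity
    · rw [norm_zero]; positivity
  refine (Finset.sum_le_sum fun b _ => h b).trans (le_of_eq ?_)
  rw [Finset.sum_add_distrib, ← Finset.mul_sum, ← Finset.mul_sum, Finset.sum_comm]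
  simp
  linarith [alp_add_bet d lam]

lemma cc_le_bet {d : ℕ} (hd : 3 ≤ d) (C₀ : ℝ) (hC₀ : 1 ≤ C₀) (lam : ℝ)
    (h1 : C₀⁻¹ ≤ lam) : cc d C₀ ≤ 2 * bet d lam := by
  have hd' : (3 : ℝ) ≤ d := by exact_mod_cast hd
  have hC : 0 < C₀ := by linarith
  have hl : 0 < lam := lt_of_lt_of_le (by positivity) h1
  have hl3 : 1 ≤ C₀ ^ 2 * lam ^ 2 := by
    have : 1 ≤ C₀ * lam := by
      have := mul_le_mul_of_nonneg_left h1 hC.le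
      rwa [mul_inv_cancel₀ hC.ne'] at this
    nlinarith
  unfold cc bet
  rw [← mul_div_assoc, div_le_div_iff₀ (by positivity) (by positivity)]
  have : 0 ≤ (d : ℝ) * lam ^ 2 := by positivity
  have h8 : (d : ℝ) * (1 * 1) ≤ d * (d * (C₀ ^ 2 * lam ^ 2)) := by
    gcongr
    nlinarith
  nlinarith

lemma theta_two {d : ℕ} (hd : 3 ≤ d) (C₀ : ℝ) (hC₀ : 1 ≤ C₀) (lam : ℝ)
    (h1 : C₀⁻¹ ≤ lam) (t : ℝ) (ht : 0 ≤ t) (ht1 : t < 1) (a b : Fin d → ZMod 2) :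
    ‖ThetaB d 2 lam (t : ℂ) a b‖ ≤ 2 / cc d C₀ := by
  have hc := cc_pos hd C₀
  have hcb := cc_le_bet hd C₀ hC₀ lam h1
  have hd' : (3 : ℝ) ≤ d := by exact_mod_cast hd
  by_cases hu : IsUnit (1 - (t : ℂ) • SBmat d 2 lam).det
  · have hM := Matrix.mul_nonsing_inv _ hu
    obtain ⟨x, -, hx⟩ := Finset.exists_max_image Finset.univ
      (fun x => ‖ThetaB d 2 lam (t : ℂ) x b‖) ⟨a, Finset.mem_univ a⟩
    refine (hx a (Finset.mem_univ a)).trans ?_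
    have e1 : ∑ y, (1 - (t : ℂ) • SBmat d 2 lam) x y * ThetaB d 2 lam (t : ℂ) y b =
        (1 : Matrix (Fin d → ZMod 2) (Fin d → ZMod 2) ℂ) x b := by
      have h9 := congrFun (congrFun hM x) b
      rw [Matrix.mul_apply] at h9
      exact h9
    simp_rw [Matrix.sub_apply, Matrix.smul_apply, sub_mul, smul_eq_mul, mul_assoc] at e1
    rw [Finset.sum_sub_distrib] at e1
    have e2 : ∑ y, (1 : Matrix (Fin d → ZMod 2) (Fin d → ZMod 2) ℂ) x y * ThetaB d 2 lam (t : ℂ) y b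
        = ThetaB d 2 lam (t : ℂ) x b := by simp [Matrix.one_apply]
    rw [e2, sub_eq_iff_eq_add] at e1
    set N := ‖ThetaB d 2 lam (t : ℂ) x b‖ with hN
    have hN0 : 0 ≤ N := norm_nonneg _
    have e3 : N ≤ 1 + (1 - d * bet d lam) * N := by
      rw [hN, e1]
      refine (norm_add_le _ _).trans (add_le_add ?_ ?_)
      · rw [Matrix.one_apply]; split_ifs <;> simp
      · rw [← e1, ← hN]
        refine le_trans ?_ (mul_le_mul_of_nonneg_right (row_two lam x) hN0)
        rw [Finset.sum_mul]
        refine norm_sum_le_of_le _ fun y _ => ?_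
        rw [norm_mul, norm_mul, Complex.norm_real, Real.norm_of_nonneg ht]
        have g1 := hx y (Finset.mem_univ y)
        have g2 := mul_le_mul_of_nonneg_left g1 (norm_nonneg (SBmat d 2 lam x y))
        have g3 : 0 ≤ ‖SBmat d 2 lam x y‖ * ‖ThetaB d 2 lam (t : ℂ) y b‖ := by positivity
        calc _ ≤ 1 * (‖SBmat d 2 lam x y‖ * ‖ThetaB d 2 lam (t : ℂ) y b‖) := by gcongr
          _ ≤ _ := by rw [one_mul]; exact g2
    rw [le_div_iff₀ hc]
    have hb := bet_nonneg d lam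
    have e4 : (d * bet d lam) * N ≤ 1 := by linarith
    have e5 : bet d lam * N ≤ d * bet d lam * N := by
      have : 0 ≤ bet d lam * N := by positivity
      nlinarith
    nlinarith
  · have : ThetaB d 2 lam (t : ℂ) = 0 := Matrix.nonsing_inv_apply_not_isUnit _ hu
    rw [this]
    simp; positivity

lemma case_two {d : ℕ} (hd : 3 ≤ d) (C₀ : ℝ) (hC₀ : 1 ≤ C₀) (lam : ℝ)
    (h1 : C₀⁻¹ ≤ lam) (t : ℝ) (ht : 0 ≤ t) (ht1 : t < 1) (a : Fin d → ZMod 2) :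
    ‖ThetaB d 2 lam (t : ℂ) 0 a - (((2 : ℕ) : ℂ) ^ (2 * d))⁻¹ *
        ∑ a' : Fin d → ZMod 2, ∑ b' : Fin d → ZMod 2, ThetaB d 2 lam (t : ℂ) a' b'‖ ≤
      4 / cc d C₀ := by
  have key := theta_two hd C₀ hC₀ lam h1 t ht ht1
  refine (norm_sub_le _ _).trans ?_
  have h2 : ‖(((2 : ℕ) : ℂ) ^ (2 * d))⁻¹ *
        ∑ a' : Fin d → ZMod 2, ∑ b' : Fin d → ZMod 2, ThetaB d 2 lam (t : ℂ) a' b'‖ ≤ 2 / cc d C₀ := by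
    rw [norm_mul, norm_inv, norm_pow, Complex.norm_natCast]
    have : ‖∑ a' : Fin d → ZMod 2, ∑ b' : Fin d → ZMod 2, ThetaB d 2 lam (t : ℂ) a' b'‖ ≤
        ((2 : ℕ) : ℝ) ^ (2 * d) * (2 / cc d C₀) := by
      refine (norm_sum_le_of_le _ fun a' _ => norm_sum_le_of_le _ fun b' _ => key a' b').trans
        (le_of_eq ?_)
      simp only [Finset.sum_const, Finset.card_univ, Fintype.card_pi, ZMod.card, Finset.prod_const,
        Fintype.card_fin, nsmul_eq_mul]
      push_cast
      ring
    calc _ ≤ (((2 : ℕ) : ℝ) ^ (2 * d))⁻¹ * (((2 : ℕ) : ℝ) ^ (2 * d) * (2 / cc d C₀)) := by gcongr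
      _ = _ := by rw [inv_mul_cancel_left₀ (by positivity)]
  have h3 := key 0 a
  have : 4 / cc d C₀ = 2 / cc d C₀ + 2 / cc d C₀ := by ring
  linarith


/-- **Propagator without zero mode (Lemma 2.19, part 8).**
With `Θ̊^(B)_t(a,b) := Θ^(B)_t(a,b) − L^{−2d} Σ_{a',b'} Θ^(B)_t(a',b')`, for any `τ > 0`
there is `C > 0`, depending only on `d, C₀, τ`, such that for every `L ≥ 2`, `t ∈ [0,1)`
and `a ∈ ℤ_L^d`: `|Θ̊^(B)_t(0,a)| ≤ C·L^τ·(|a|+1)^{−(d−2)}`. -/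
theorem propagator_no_zero_mode (d : ℕ) (hd : 3 ≤ d) (C₀ : ℝ) (hC₀ : 1 ≤ C₀)
    (τ : ℝ) (hτ : 0 < τ) :
    ∃ C : ℝ, 0 < C ∧
      ∀ (L : ℕ) [NeZero L], 2 ≤ L →
        ∀ lam : ℝ, C₀⁻¹ ≤ lam → lam ≤ C₀ →
          ∀ t : ℝ, 0 ≤ t → t < 1 →
            ∀ a : Fin d → ZMod L,
              norm (ThetaB d L lam (t : ℂ) 0 a -
                  ((L : ℂ) ^ (2 * d))⁻¹ *
                    ∑ a' : Fin d → ZMod L, ∑ b' : Fin d → ZMod L,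
                      ThetaB d L lam (t : ℂ) a' b') ≤
                C * (L : ℝ) ^ τ * (((torusDist 0 a : ℝ) + 1) ^ (d - 2))⁻¹ := by

  obtain ⟨e, rfl⟩ : ∃ e, d = e + 2 := ⟨d - 2, by omega⟩
  have hc := cc_pos hd C₀
  set η : ℝ := τ / (2 * (e + 2) + 2) with hη
  have hη0 : 0 < η := by positivity
  set n : ℕ := ⌈((e : ℝ) + 2) / (2 * η)⌉₊ with hn
  set A : ℝ := 1 + (2 + 2 * η) / η with hA
  have hA1 : 1 ≤ A := by
    rw [hA]; exact le_add_of_nonneg_right (by positivity)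
  set C3 : ℝ := 1 + C2 e n C₀ * A + 2 * ((e : ℝ) + 3) ^ e +
        n.factorial / (8 * cc (e + 2) C₀) ^ (n + 1) * ((e : ℝ) + 3) ^ e with hC3
  have hC2 := C2_pos e n C₀
  have hC30 : 0 < C3 := by positivity
  set C4 : ℝ := 4 / cc (e + 2) C₀ * (((e : ℝ) + 3) * 2) ^ e with hC4
  have hC40 : 0 < C4 := by positivity
  refine ⟨C3 + C4, by positivity, ?_⟩
  intro L _ hL lam h1 h2 t ht ht1 a
  have hsimp : e + 2 - 2 = e := by omega
  rw [hsimp]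
  have hL1 : (1 : ℝ) ≤ L := by exact_mod_cast (by omega : 1 ≤ L)
  have hLt : 1 ≤ (L : ℝ) ^ τ := Real.one_le_rpow hL1 hτ.le
  rcases Nat.lt_or_ge L 3 with hL3 | hL3
  · obtain rfl : L = 2 := by omega
    have hRL := R_le a
    have h := case_two hd C₀ hC₀ lam h1 t ht ht1 a
    push_cast at hRL h ⊢
    refine h.trans ?_
    set R : ℝ := (torusDist 0 a : ℝ) + 1 with hRdef
    have hR0 : 0 < R := by positivity
    have hR : R ^ e ≤ (((e : ℝ) + 3) * 2) ^ e := by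
      refine pow_le_pow_left₀ hR0.le ?_ e
      linarith
    rw [← div_eq_mul_inv, le_div_iff₀ (by positivity)]
    push_cast at hLt
    calc 4 / cc (e + 2) C₀ * R ^ e ≤ C4 := by rw [hC4]; gcongr
      _ ≤ C3 + C4 := by linarith
      _ ≤ _ := le_mul_of_one_le_right (by positivity) hLt
  · have hL0 : (0 : ℝ) < L := by linarith
    set Y : ℝ := (L : ℝ) ^ η with hY
    have hY1 : 1 ≤ Y := Real.one_le_rpow hL1 hη0.le
    have hYn : (L : ℝ) ^ (e + 2) ≤ (Y ^ 2) ^ n := by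
      rw [← pow_mul, hY, ← Real.rpow_mul_natCast hL0.le, ← Real.rpow_natCast]
      refine Real.rpow_le_rpow_of_exponent_le hL1 ?_
      have := Nat.le_ceil (((e : ℝ) + 2) / (2 * η))
      rw [← hn, div_le_iff₀ (by positivity)] at this
      push_cast
      linarith
    have hlog : 1 + Real.log (L ^ 2 * Y ^ 2) ≤ A * Y := by
      have l1 : Real.log Y = η * Real.log L := by rw [hY, Real.log_rpow hL0]
      have l2 := Real.log_le_rpow_div hL0.le hη0
      rw [← hY] at l2
      rw [Real.log_mul (by positivity) (by positivity), Real.log_pow, Real.log_pow, l1]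
      push_cast
      have l3 : (2 + 2 * η) * Real.log L ≤ (2 + 2 * η) * (Y / η) := by gcongr
      have l4 : A * Y = Y + (2 + 2 * η) * (Y / η) := by rw [hA]; field_simp
      rw [l4]
      linarith
    have hmain := big_L hd hL3 C₀ hC₀ lam h1 h2 t ht ht1 a Y hY1 n hYn A hA1 hlog
    have hYτ : Y ^ (2 * (e + 2) + 2) = (L : ℝ) ^ τ := by
      rw [hY, ← Real.rpow_mul_natCast hL0.le]
      congr 1
      rw [hη]; push_cast; field_simp
    rw [hYτ, ← hC3] at hmain
    refine hmain.trans ?_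
    gcongr
    linarith
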